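/- Assume Vopěnka's principle. Let (F_i : M_i → N)_{i ∈ I} be a set-indexed collection of functors between preaccessible categories M_i (i ∈ I) and N. Then there are arbitrarily large regular cardinals λ such that each functor F_i sends λ-presentable objects of M_i to λ-presentable objects of N. -/

import Mathlib

/-!
Vopěnka's principle replaces an elementary embedding of the universe.

*Reflection.* Graphs code structures with finitely many ternary relations (`vopenka_ternary`), so
Vopěnka's principle gives a homomorphism between two different structures of the following kind:
the set of ordinals up to some ordinal `a`, with the order, the cofinality function and a fixed
ladder system (a choice of cofinal sequences) as part of the structure, together with a family of
sets fibred over these ordinals. On ordinals such a homomorphism `j` is increasing, and the ladder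
system makes the argument of Kunen's inconsistency theorem available: if `j θ ≤ θ`, then the
supremum `σ` of the critical sequence of an ordinal moved below `θ` would be a fixed point of
cofinality `ω`, its ladder would consist of fixed points cofinal in `σ`, and no fixed point lies
between two consecutive terms of the critical sequence (`PreservesLadder.eq_of_apply_le`). So `j`
moves every ordinal from its critical point `lam` on upwards. Hence `lam` is regular, exceeds any
parameter named in the structure, and is closed under any function `H` named in the structure, and
the homomorphism carries the fibre over `lam` to the fibre over a larger ordinal `lam'`
(`reflection`).

*Covering.* A preaccessible category has a small dense family, so its objects can be regarded as
multi-sorted unary algebras, with the morphisms from the dense objects as elements. Going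
through the ordinals, choose greedily at stage `ξ` an object `X` of some `Mi i` and a sequence of
fewer than `ξ` elements of `X` which is not contained in the image of any morphism to `X`,
injective on elements, from an object chosen earlier. If an object were chosen at stage `lam`,
reflection would embed it into the object chosen at stage `lam'`, with an image containing the whole
sequence of elements chosen there, because that sequence has length below the critical point:
a contradiction. So nothing is left to choose at stage `lam`, which means that every set of fewer
than `lam` elements of an object is covered by an object chosen before `lam`
(`exists_covering_cardinal`).

*Conclusion.* Through `H`, the objects chosen before `lam` have fewer than `lam` elements, and their
images under `F i` are `lam`-presentable. An object `X` is then the `lam`-filtered colimit of its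
subobjects among them, so if `X` is `lam`-presentable it is a retract of one of them
(`exists_retract`), and `(F i).obj X` is a retract of a `lam`-presentable object.
-/

universe w v u v₁ u₁ v₂ u₂

open CategoryTheory Limits Opposite

namespace Paper

variable {M : Type u} [Category.{v} M]

/-! ### Lifting properties, weak factorization systems -/

/-- The class of morphisms with the right lifting property against a set of arrows. -/
def rlpSet (X : Set (Arrow M)) : MorphismProperty M :=
  fun _ _ f => ∀ a ∈ X, HasLiftingProperty a.hom f

/-- The right lifting property class of a class of morphisms. -/
def rlpC (L : MorphismProperty M) : MorphismProperty M :=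
  fun _ _ f => ∀ ⦃A B : M⦄ (g : A ⟶ B), L g → HasLiftingProperty g f

/-- The left lifting property class of a class of morphisms. -/
def llpC (R : MorphismProperty M) : MorphismProperty M :=
  fun _ _ f => ∀ ⦃A B : M⦄ (g : A ⟶ B), R g → HasLiftingProperty f g

/-- A weak factorization system `(L, R)`. -/
structure IsWFS (L R : MorphismProperty M) : Prop where
  rlp_eq : rlpC L = R
  llp_eq : llpC R = L
  factorization : ∀ ⦃A B : M⦄ (f : A ⟶ B),
    ∃ (Z : M) (i : A ⟶ Z) (p : Z ⟶ B), L i ∧ R p ∧ i ≫ p = f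

/-! ### Posets, smooth and good diagrams -/

/-- `a` is the predecessor of `b`; equivalently `b` is isolated with predecessor `a`. -/
def IsSuccOf {P : Type w} [PartialOrder P] (a b : P) : Prop :=
  a < b ∧ ∀ c : P, c < b → c ≤ a

/-- A limit element of a good poset: not the least element and not isolated. -/
def IsLimitElem {P : Type w} [PartialOrder P] [OrderBot P] (b : P) : Prop :=
  b ≠ ⊥ ∧ ¬ ∃ a : P, IsSuccOf a b

/-- A preorder is `κ`-directed if every subset of cardinality `< κ` has an upper bound. -/
def CardDirected (κ : Cardinal.{w}) (P : Type w) [Preorder P] : Prop :=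
  ∀ s : Set P, Cardinal.mk s < κ → ∃ b : P, ∀ x ∈ s, x ≤ b

/-- A category is `κ`-filtered if every diagram indexed by a category with fewer
than `κ` morphisms admits a cocone. -/
def CardFiltered (κ : Cardinal.{v}) (J : Type u₁) [Category.{v₁} J] : Prop :=
  ∀ (A : Type v) [SmallCategory A], Cardinal.mk (Arrow A) < κ →
    ∀ F : A ⥤ J, Nonempty (Cocone F)

section Smooth

variable {P : Type w} [PartialOrder P] (D : P ⥤ M)

/-- Restriction of a diagram to the initial segment `{y | y < b}`. -/
def restrictIio (b : P) : {y : P // y < b} ⥤ M :=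
  Monotone.functor (f := fun y : {y : P // y < b} => (y : P)) (fun _ _ h => h) ⋙ D

/-- The canonical cocone on the restriction of `D` to `{y | y < b}` with point `D.obj b`. -/
def iioCocone (b : P) : Cocone (restrictIio D b) where
  pt := D.obj b
  ι :=
    { app := fun y => D.map (homOfLE y.2.le)
      naturality := fun y z f => by
        dsimp [restrictIio, Monotone.functor]
        rw [Category.comp_id, ← D.map_comp]
        rfl }

/-- A diagram over a poset with a least element is smooth if at every limit element the
canonical cocone of the restriction to the strict initial segment is a colimit cocone. -/
def IsSmooth [OrderBot P] : Prop :=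
  ∀ b : P, IsLimitElem b → Nonempty (IsColimit (iioCocone D b))

end Smooth

/-! ### Cellular morphisms and cofibrations -/

/-- `Q` contains the set of arrows `X`. -/
def ContainsX (X : Set (Arrow M)) (Q : MorphismProperty M) : Prop :=
  ∀ a ∈ X, Q a.hom

/-- `Q` is stable under pushouts of morphisms in `X` along arbitrary morphisms. -/
def StableUnderPushoutsOf (X : Set (Arrow M)) (Q : MorphismProperty M) : Prop :=
  ∀ ⦃A B A' B' : M⦄ (u : A ⟶ A') (f : A ⟶ B) (g : A' ⟶ B') (v : B ⟶ B'),
    Arrow.mk f ∈ X → IsPushout u f g v → Q g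

/-- `Q` is stable under transfinite compositions: for every smooth diagram over a
well-ordered set with least element, all of whose links lie in `Q`, the composite
(the component at `⊥` of any colimit cocone) lies in `Q`. -/
def StableUnderTransfiniteComposition (Q : MorphismProperty M) : Prop :=
  ∀ (β : Type v) [LinearOrder β] [OrderBot β], WellFoundedLT β →
    ∀ (D : β ⥤ M), IsSmooth D →
      (∀ (a b : β) (h : IsSuccOf a b), Q (D.map (homOfLE h.1.le))) →
      ∀ (c : Cocone D), IsColimit c → Q (c.ι.app ⊥)

/-- `Q` is stable under retracts (in the arrow category). -/
def IsRetractOf {A B A' B' : M} (f : A ⟶ B) (g : A' ⟶ B') : Prop :=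
  ∃ (iA : A ⟶ A') (rA : A' ⟶ A) (iB : B ⟶ B') (rB : B' ⟶ B),
    iA ≫ rA = 𝟙 A ∧ iB ≫ rB = 𝟙 B ∧ iA ≫ g = f ≫ iB ∧ rA ≫ f = g ≫ rB

def StableUnderRetracts (Q : MorphismProperty M) : Prop :=
  ∀ ⦃A B A' B' : M⦄ (f : A ⟶ B) (g : A' ⟶ B'), IsRetractOf f g → Q g → Q f

/-- `Q` contains `X` and is closed under pushouts along `X` and transfinite compositions. -/
def IsCellClosed (X : Set (Arrow M)) (Q : MorphismProperty M) : Prop :=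
  ContainsX X Q ∧ StableUnderPushoutsOf X Q ∧ StableUnderTransfiniteComposition Q

/-- The class of `X`-cellular morphisms: the smallest class containing `X` closed under
pushouts along morphisms of `X` and transfinite compositions. -/
def cellP (X : Set (Arrow M)) : MorphismProperty M :=
  fun _ _ f => ∀ Q : MorphismProperty M, IsCellClosed X Q → Q f

/-- The class of `X`-cofibrations: the smallest class containing `X` closed under
pushouts along morphisms of `X`, transfinite compositions and retracts. -/
def cofP (X : Set (Arrow M)) : MorphismProperty M :=
  fun _ _ f => ∀ Q : MorphismProperty M, IsCellClosed X Q → StableUnderRetracts Q → Q f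

/-! ### Smallness and presentability -/

/-- `Hom(A, -)` maps the colimit cocone `c` to a colimit cocone in types. -/
def CoyonedaPreserves (A : M) {J : Type u₁} [Category.{v₁} J] (D : J ⥤ M) (c : Cocone D) :
    Prop :=
  Nonempty (IsColimit ((coyoneda.obj (op A)).mapCocone c))

/-- `A` is `κ`-small relative to `X`: `Hom(A, -)` preserves colimits of smooth κ-directed
well-ordered chains whose links are `X`-cellular. -/
def SmallRel (κ : Cardinal.{v}) (X : Set (Arrow M)) (A : M) : Prop :=
  ∀ (P : Type v) [LinearOrder P] [OrderBot P], WellFoundedLT P → CardDirected κ P →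
    ∀ (D : P ⥤ M), IsSmooth D →
      (∀ (a b : P) (h : IsSuccOf a b), cellP X (D.map (homOfLE h.1.le))) →
      ∀ (c : Cocone D), IsColimit c → CoyonedaPreserves A D c

/-- `A` is strictly `κ`-small relative to `X`: `Hom(A, -)` preserves colimits of κ-directed
good (smooth, well-founded with bottom) diagrams whose links are `X`-cellular. -/
def StrictlySmallRel (κ : Cardinal.{v}) (X : Set (Arrow M)) (A : M) : Prop :=
  ∀ (P : Type v) [PartialOrder P] [OrderBot P], WellFoundedLT P → CardDirected κ P →
    ∀ (D : P ⥤ M), IsSmooth D →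
      (∀ (a b : P) (h : IsSuccOf a b), cellP X (D.map (homOfLE h.1.le))) →
      ∀ (c : Cocone D), IsColimit c → CoyonedaPreserves A D c

/-- `A` is `κ`-presentable: `Hom(A, -)` preserves `κ`-filtered colimits. -/
def IsCardinalPresentable (κ : Cardinal.{v}) (A : M) : Prop :=
  ∀ (J : Type v) [SmallCategory J], CardFiltered κ J →
    ∀ (D : J ⥤ M) (c : Cocone D), IsColimit c → CoyonedaPreserves A D c

/-- `A` is presentable: `κ`-presentable for some regular cardinal `κ`. -/
def IsPresentableObj (A : M) : Prop :=
  ∃ κ : Cardinal.{v}, κ.IsRegular ∧ IsCardinalPresentable κ A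

/-! ### Notions of cofibrant generation -/

/-- `X` is a (small) generating set: `X ⊆ L` and `X^□ = R`. -/
structure IsGeneratingSet (L R : MorphismProperty M) (X : Set (Arrow M)) : Prop where
  small : Small.{v} X
  subset : ∀ a ∈ X, L a.hom
  rlp : rlpSet X = R

def SetwiseCofGen (L R : MorphismProperty M) : Prop :=
  ∃ X : Set (Arrow M), IsGeneratingSet L R X

def WeaklyCofGenBy (L R : MorphismProperty M) (X : Set (Arrow M)) : Prop :=
  IsGeneratingSet L R X ∧ cofP X = L

def CofGenBy (L R : MorphismProperty M) (X : Set (Arrow M)) (κ : Cardinal.{v}) : Prop :=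
  IsGeneratingSet L R X ∧ ∀ a ∈ X, SmallRel κ X a.left

def StrictlyCofGenBy (L R : MorphismProperty M) (X : Set (Arrow M)) (κ : Cardinal.{v}) : Prop :=
  IsGeneratingSet L R X ∧ ∀ a ∈ X, StrictlySmallRel κ X a.left

def SemiPerfectlyCofGenBy (L R : MorphismProperty M) (X : Set (Arrow M)) (κ : Cardinal.{v}) :
    Prop :=
  IsGeneratingSet L R X ∧ ∀ a ∈ X, IsCardinalPresentable κ a.left

def PerfectlyCofGenBy (L R : MorphismProperty M) (X : Set (Arrow M)) (κ : Cardinal.{v}) : Prop :=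
  SemiPerfectlyCofGenBy L R X κ ∧ ∀ a ∈ X, IsCardinalPresentable κ a.right

def CofGen (L R : MorphismProperty M) : Prop :=
  ∃ (X : Set (Arrow M)) (κ : Cardinal.{v}), κ.IsRegular ∧ CofGenBy L R X κ

def StrictlyCofGen (L R : MorphismProperty M) : Prop :=
  ∃ (X : Set (Arrow M)) (κ : Cardinal.{v}), κ.IsRegular ∧ StrictlyCofGenBy L R X κ

def SemiPerfectlyCofGen (L R : MorphismProperty M) : Prop :=
  ∃ (X : Set (Arrow M)) (κ : Cardinal.{v}), κ.IsRegular ∧ SemiPerfectlyCofGenBy L R X κ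

def PerfectlyCofGen (L R : MorphismProperty M) : Prop :=
  ∃ (X : Set (Arrow M)) (κ : Cardinal.{v}), κ.IsRegular ∧ PerfectlyCofGenBy L R X κ

/-! ### Cofibrant objects -/

/-- `A` is `L`-cofibrant: the morphism from an initial object to `A` lies in `L`. -/
def CofibrantObj (L : MorphismProperty M) (A : M) : Prop :=
  ∀ ⦃I : M⦄ (hI : IsInitial I), L (hI.to A)

/-- `A` is `R`-fibrant: the morphism from `A` to a terminal object lies in `R`. -/
def FibrantObj (R : MorphismProperty M) (A : M) : Prop :=
  ∀ ⦃T : M⦄ (hT : IsTerminal T), R (hT.from A)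

/-- A set of objects closed under `λ`-small colimits (diagrams with fewer than `λ` morphisms). -/
def ClosedUnderColimitsCard (lam : Cardinal.{v}) (S : Set M) : Prop :=
  ∀ (J : Type v) [SmallCategory J], Cardinal.mk (Arrow J) < lam →
    ∀ (D : J ⥤ M) (c : Cocone D), IsColimit c → (∀ j, D.obj j ∈ S) → c.pt ∈ S

/-- The smallest class of objects containing the domains and codomains of `X` and closed
under `λ`-small colimits in `M`. -/
def Atilde (X : Set (Arrow M)) (lam : Cardinal.{v}) : Set M :=
  { m | ∀ S : Set M, (∀ a ∈ X, a.left ∈ S ∧ a.right ∈ S) →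
      ClosedUnderColimitsCard lam S → m ∈ S }

/-- `A(X, λ)`: the intersection of `Atilde X λ` with the cofibrant objects. -/
def Aset (L : MorphismProperty M) (X : Set (Arrow M)) (lam : Cardinal.{v}) : Set M :=
  { m | m ∈ Atilde X lam ∧ CofibrantObj L m }

/-- A set of objects is essentially small. -/
def EssentiallySmallSet (S : Set M) : Prop :=
  ∃ T : Set M, Small.{v} T ∧ T ⊆ S ∧ ∀ m ∈ S, ∃ t ∈ T, Nonempty (m ≅ t)

/-- `A` is a `λ`-filtered colimit (in `M`) of objects from `S`. -/
def IsCardFilteredColimitOf (lam : Cardinal.{v}) (S : Set M) (A : M) : Prop :=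
  ∃ J : Cat.{v, v}, CardFiltered lam J ∧
    ∃ D : J ⥤ M, (∀ j, D.obj j ∈ S) ∧ ∃ c : Cocone D, Nonempty (IsColimit c) ∧ c.pt = A

/-! ### Preaccessible and locally presentable categories -/

def PreaccessibleAt (lam : Cardinal.{v}) (C : Type u₁) [Category.{v} C] : Prop :=
  ∃ A : Set C, Small.{v} A ∧ (∀ a ∈ A, IsCardinalPresentable lam a) ∧
    ∀ X : C, IsCardFilteredColimitOf lam A X

def Preaccessible (C : Type u₁) [Category.{v} C] : Prop :=
  ∃ lam : Cardinal.{v}, lam.IsRegular ∧ PreaccessibleAt lam C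

def LocallyPresentable (C : Type u₁) [Category.{v} C] : Prop :=
  HasColimitsOfSize.{v, v} C ∧ Preaccessible C

/-! ### Vopěnka's principle -/

/-- A graph: a type with a binary relation. -/
structure Graph : Type (v + 1) where
  V : Type v
  E : V → V → Prop

/-- A homomorphism of graphs. -/
structure GraphHom (G H : Graph.{v}) : Type v where
  toFun : G.V → H.V
  map : ∀ {a b : G.V}, G.E a b → H.E (toFun a) (toFun b)

/-- Vopěnka's principle: for every ordinal-indexed family of graphs there exist two distinct
indices and a homomorphism between the corresponding graphs; equivalently, the category of
graphs has no large discrete full subcategory. -/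
def VopenkaPrinciple : Prop :=
  ∀ G : Ordinal.{v} → Graph.{v}, ∃ i j : Ordinal.{v}, i ≠ j ∧ Nonempty (GraphHom (G i) (G j))


/-! ### From graphs to structures with ternary relations -/

/-- Vertices of the graph coding a structure on `U` whose relation instances are indexed by `T`:
two poles `s`, `t` and labels `lab l`, which together form a rigid core; the elements `u x` of the
structure; one vertex `tup τ` for each relation instance, and three vertices `hlp τ p` which point
to the coordinates of that instance. -/
inductive Vtx (L U T : Type v) : Type v
  | s : Vtx L U T
  | t : Vtx L U T
  | lab (l : L) : Vtx L U T
  | u (x : U) : Vtx L U T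
  | tup (τ : T) : Vtx L U T
  | hlp (τ : T) (p : Fin 3) : Vtx L U T

/-- Edges of the coding graph. On the core these are the edges `s → l → t → s` and `l → l'` for
`l < l'`. Every vertex outside the core points to both poles and to exactly one label, and
`hlp τ p` also points to `tup τ` and to the `p`-th coordinate of `τ`. -/
def Vtx.edge {L U T : Type v} [LT L] (lu : L) (lt : T → L) (lp : Fin 3 → L)
    (co : T → Fin 3 → U) : Vtx L U T → Vtx L U T → Prop
  | .s, .lab _ => True
  | .lab l, .lab l' => l < l'
  | .lab _, .t => True
  | .t, .s => True
  | .u _, .s => True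
  | .u _, .t => True
  | .u _, .lab l => l = lu
  | .tup _, .s => True
  | .tup _, .t => True
  | .tup τ, .lab l => l = lt τ
  | .hlp _ _, .s => True
  | .hlp _ _, .t => True
  | .hlp _ p, .lab l => l = lp p
  | .hlp τ _, .tup τ' => τ = τ'
  | .hlp τ p, .u x => x = co τ p
  | _, _ => False

/-- The only directed triangles of the coding graph are the rotations of `s → l → t → s`
(with `l` a label): outside the core the graph is acyclic, and no edge leaves the core. -/
lemma Vtx.triangle {L U T : Type v} [Preorder L] {lu : L} {lt : T → L} {lp : Fin 3 → L}
    {co : T → Fin 3 → U} {x y z : Vtx L U T} (h₁ : Vtx.edge lu lt lp co x y)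
    (h₂ : Vtx.edge lu lt lp co y z) (h₃ : Vtx.edge lu lt lp co z x) :
    (x = .s ∧ (∃ l, y = .lab l) ∧ z = .t) ∨ (y = .s ∧ (∃ l, z = .lab l) ∧ x = .t) ∨
      (z = .s ∧ (∃ l, x = .lab l) ∧ y = .t) := by
  rcases x with _ | _ | l | x | τ | ⟨τ, p⟩ <;> rcases y with _ | _ | l' | y | τ' | ⟨τ', p'⟩ <;>
    first
    | exact h₁.elim
    | (rcases z with _ | _ | l'' | z | τ'' | ⟨τ'', p''⟩ <;>
        first
        | exact h₂.elim
        | exact h₃.elim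
        | exact absurd (lt_trans (lt_trans h₁ h₂) h₃) (lt_irrefl _)
        | simp)

/-- A homomorphism between two coding graphs with the same finite set of labels is the identity on
the core. -/
lemma Vtx.core_fixed {L U T U' T' : Type v} [LinearOrder L] [Finite L] {lu : L} {lt : T → L}
    {lp : Fin 3 → L} {co : T → Fin 3 → U} {lt' : T' → L} {co' : T' → Fin 3 → U'}
    {a b : L} (hab : a < b) (f : Vtx L U T → Vtx L U' T')
    (hf : ∀ x y, Vtx.edge lu lt lp co x y → Vtx.edge lu lt' lp co' (f x) (f y)) :
    f .s = .s ∧ f .t = .t ∧ ∀ l, f (.lab l) = .lab l := by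
  have tri : ∀ l, _ := fun l : L =>
    Vtx.triangle (hf .s (.lab l) trivial) (hf (.lab l) .t trivial) (hf .t .s trivial)
  have hab' := hf (.lab a) (.lab b) hab
  obtain ⟨hs, -, ht⟩ : f .s = .s ∧ (∃ l, f (.lab a) = .lab l) ∧ f .t = .t := by
    rcases tri a with h | ⟨h1, ⟨l, h2⟩, h3⟩ | ⟨h1, ⟨l, h2⟩, h3⟩
    · exact h
    · rcases tri b with ⟨h4, h5, h6⟩ | ⟨h4, h5, h6⟩ | ⟨h4, h5, h6⟩
      · simp_all
      · rw [h1, h4] at hab'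
        exact hab'.elim
      · simp_all
    · rcases tri b with ⟨h4, h5, h6⟩ | ⟨h4, h5, h6⟩ | ⟨h4, h5, h6⟩
      · simp_all
      · simp_all
      · rw [h3, h6] at hab'
        exact hab'.elim
  have hl : ∀ l, ∃ l', f (.lab l) = .lab l' := by
    intro l
    rcases tri l with ⟨-, h, -⟩ | ⟨-, -, h⟩ | ⟨h, -, -⟩
    · exact h
    · simp_all
    · simp_all
  choose g hg using hl
  have hmono : StrictMono g := by
    intro x y hxy
    have := hf (.lab x) (.lab y) hxy
    rw [hg, hg] at this
    exact this
  refine ⟨hs, ht, fun l => ?_⟩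
  rw [hg, le_antisymm (hmono.le_id l) (hmono.id_le l), id]

/-- Vopěnka's principle for structures with finitely many ternary relations: among any
ordinal-indexed family of such structures there is a homomorphism between two distinct members. -/
lemma vopenka_ternary_small (vp : VopenkaPrinciple.{v}) {K : Type} [Finite K]
    (U : Ordinal.{v} → Type v) (R : ∀ α, K → U α → U α → U α → Prop) :
    ∃ α β : Ordinal.{v}, α ≠ β ∧ ∃ f : U α → U β,
      ∀ k x y z, R α k x y z → R β k (f x) (f y) (f z) := by
  classical
  obtain ⟨n, ⟨e⟩⟩ := Finite.exists_equiv_fin (Unit ⊕ K ⊕ Fin 3)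
  let L : Type v := ULift (Fin n)
  let lb : Unit ⊕ K ⊕ Fin 3 → L := fun x => ⟨e x⟩
  have lb_inj : Function.Injective lb := fun x y h => e.injective (congrArg ULift.down h)
  let T : Ordinal.{v} → Type v := fun α =>
    {τ : ULift.{v} K × (Fin 3 → U α) // R α τ.1.down (τ.2 0) (τ.2 1) (τ.2 2)}
  let lt : ∀ α, T α → L := fun α τ => lb (.inr (.inl τ.1.1.down))
  let lp : Fin 3 → L := fun p => lb (.inr (.inr p))
  let co : ∀ α, T α → Fin 3 → U α := fun α τ => τ.1.2
  obtain ⟨α, β, hne, ⟨⟨f, hf⟩⟩⟩ := vp fun α =>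
    ⟨Vtx L (U α) (T α), Vtx.edge (lb (.inl ())) (lt α) lp (co α)⟩
  refine ⟨α, β, hne, ?_⟩
  dsimp only at f hf
  obtain ⟨a, b, hab⟩ : ∃ a b : L, a < b := by
    rcases lt_or_gt_of_ne (lb_inj.ne (show (.inr (.inr 0) : Unit ⊕ K ⊕ Fin 3) ≠ .inr (.inr 1) by
      simp)) with h | h
    · exact ⟨_, _, h⟩
    · exact ⟨_, _, h⟩
  obtain ⟨hs, ht, hl⟩ := Vtx.core_fixed hab f fun x y h => hf h
  -- The label of a vertex outside the core is preserved.
  have hu : ∀ x, ∃ x', f (.u x) = .u x' := by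
    intro x
    have h1 := hf (a := .u x) (b := .s) trivial
    have h2 := hf (a := .u x) (b := .t) trivial
    have h3 := hf (a := .u x) (b := .lab (lb (.inl ()))) rfl
    rw [hs] at h1
    rw [ht] at h2
    rw [hl] at h3
    rcases hfx : f (.u x) with _ | _ | l | x' | τ | ⟨τ, p⟩ <;> rw [hfx] at h1 h2 h3
    · exact h1.elim
    · exact h2.elim
    · exact h1.elim
    · exact ⟨_, rfl⟩
    · cases lb_inj h3
    · cases lb_inj h3
  have htup : ∀ τ, ∃ τ', f (.tup τ) = .tup τ' ∧ τ'.1.1 = τ.1.1 := by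
    intro τ
    have h1 := hf (a := .tup τ) (b := .s) trivial
    have h2 := hf (a := .tup τ) (b := .t) trivial
    have h3 := hf (a := .tup τ) (b := .lab (lb (.inr (.inl τ.1.1.down)))) rfl
    rw [hs] at h1
    rw [ht] at h2
    rw [hl] at h3
    rcases hfx : f (.tup τ) with _ | _ | l | x' | τ' | ⟨τ', p⟩ <;> rw [hfx] at h1 h2 h3
    · exact h1.elim
    · exact h2.elim
    · exact h1.elim
    · cases lb_inj h3
    · refine ⟨_, rfl, ?_⟩
      have := lb_inj h3
      simp only [Sum.inr.injEq, Sum.inl.injEq] at this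
      exact ULift.down_injective this.symm
    · cases lb_inj h3
  have hhlp : ∀ τ p, ∃ τ', f (.hlp τ p) = .hlp τ' p := by
    intro τ p
    have h1 := hf (a := .hlp τ p) (b := .s) trivial
    have h2 := hf (a := .hlp τ p) (b := .t) trivial
    have h3 := hf (a := .hlp τ p) (b := .lab (lp p)) rfl
    rw [hs] at h1
    rw [ht] at h2
    rw [hl] at h3
    rcases hfx : f (.hlp τ p) with _ | _ | l | x' | τ' | ⟨τ', p'⟩ <;> rw [hfx] at h1 h2 h3
    · exact h1.elim
    · exact h2.elim
    · exact h1.elim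
    · cases lb_inj h3
    · cases lb_inj h3
    · have := lb_inj h3
      simp only [Sum.inr.injEq] at this
      exact ⟨τ', by rw [this]⟩
  choose g hg using hu
  refine ⟨g, fun k x y z hR => ?_⟩
  let τ : T α := ⟨(⟨k⟩, ![x, y, z]), hR⟩
  obtain ⟨τ', hτ', hk⟩ := htup τ
  have hco : ∀ p, co β τ' p = g (co α τ p) := by
    intro p
    obtain ⟨τ'', h⟩ := hhlp τ p
    have h1 := hf (a := .hlp τ p) (b := .tup τ) rfl
    have h2 := hf (a := .hlp τ p) (b := .u (co α τ p)) rfl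
    rw [h, hτ'] at h1
    rw [h, hg] at h2
    have h1' : τ'' = τ' := h1
    subst h1'
    exact Eq.symm h2
  have hR' := τ'.2
  rw [hk] at hR'
  have h0 : τ'.1.2 0 = g x := hco 0
  have h1 : τ'.1.2 1 = g y := hco 1
  have h2 : τ'.1.2 2 = g z := hco 2
  rw [h0, h1, h2] at hR'
  exact hR'

/-- The same for structures whose underlying types are merely essentially small. -/
lemma vopenka_ternary (vp : VopenkaPrinciple.{v}) {K : Type} [Finite K]
    (U : Ordinal.{v} → Type w) [∀ α, Small.{v} (U α)] (R : ∀ α, K → U α → U α → U α → Prop) :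
    ∃ α β : Ordinal.{v}, α ≠ β ∧ ∃ f : U α → U β,
      ∀ k x y z, R α k x y z → R β k (f x) (f y) (f z) := by
  obtain ⟨α, β, hne, f, hf⟩ := vopenka_ternary_small vp (fun α => Shrink.{v} (U α))
    (fun α k x y z => R α k ((equivShrink _).symm x) ((equivShrink _).symm y)
      ((equivShrink _).symm z))
  refine ⟨α, β, hne, fun x => (equivShrink _).symm (f (equivShrink _ x)), fun k x y z h => ?_⟩
  exact hf k _ _ _ (by simpa using h)


/-! ### Rigidity of ladder-preserving maps of ordinals -/

/-- A ladder system: for every `ξ`, a map from `ξ.cof.ord` to a cofinal subset of `ξ`. -/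
structure IsLadder (c : Ordinal.{v} → Ordinal.{v} → Ordinal.{v}) : Prop where
  lt : ∀ {ξ η}, η < ξ.cof.ord → c ξ η < ξ
  cofinal : ∀ {ξ ζ}, ζ < ξ → ∃ η < ξ.cof.ord, ζ ≤ c ξ η

lemma exists_isLadder : ∃ c, IsLadder.{v} c := by
  classical
  choose f hf using fun ξ : Ordinal.{v} => Ordinal.exists_isFundamentalSeq (o := ξ) rfl
  refine ⟨fun ξ η => if h : η < ξ.cof.ord then f ξ ⟨η, h⟩ else 0, ⟨?_, ?_⟩⟩
  · intro ξ η h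
    simp only [h, dif_pos]
    exact (f ξ ⟨η, h⟩).2
  · intro ξ ζ h
    obtain ⟨_, ⟨η, rfl⟩, h'⟩ := (hf ξ).isCofinal_range ⟨ζ, h⟩
    refine ⟨η.1, η.2, ?_⟩
    simp only [show η.1 < ξ.cof.ord from η.2, dif_pos]
    exact h'

/-- A map defined on the ordinals `≤ a` which preserves the order, the finite ordinals, `ω`,
cofinalities and a ladder system. -/
structure PreservesLadder (c : Ordinal.{v} → Ordinal.{v} → Ordinal.{v}) (a : Ordinal.{v})
    (j : Ordinal.{v} → Ordinal.{v}) : Prop where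
  omega_le : Ordinal.omega0 ≤ a
  mono : ∀ {x y}, x < y → y ≤ a → j x < j y
  zero : j 0 = 0
  succ : ∀ {x}, x < a → j (Order.succ x) = Order.succ (j x)
  omega : j Ordinal.omega0 = Ordinal.omega0
  cof : ∀ {ξ}, ξ ≤ a → j ξ.cof.ord = (j ξ).cof.ord
  ladder : ∀ {ξ η}, ξ ≤ a → η < ξ.cof.ord → j (c ξ η) = c (j ξ) (j η)

namespace PreservesLadder

variable {c : Ordinal.{v} → Ordinal.{v} → Ordinal.{v}} {a : Ordinal.{v}}
  {j : Ordinal.{v} → Ordinal.{v}}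

lemma le_apply (h : PreservesLadder c a j) {x : Ordinal.{v}} (hx : x ≤ a) : x ≤ j x := by
  induction x using WellFoundedLT.induction with
  | ind x ih =>
    by_contra! hlt
    exact (h.mono hlt hx).not_ge (ih _ hlt (hlt.le.trans hx))

lemma natCast (h : PreservesLadder c a j) (n : ℕ) : j n = n := by
  induction n with
  | zero => simpa using h.zero
  | succ n ih =>
    have := h.succ (x := n) ((Ordinal.natCast_lt_omega0 n).trans_le h.omega_le)
    rwa [ih, Order.succ_eq_add_one, ← Nat.cast_add_one] at this

/-- The supremum of a strictly increasing `ω`-sequence is a fixed point of `j` as soon as `j` maps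
every ordinal below it to an ordinal below it: otherwise the image of the ladder at `σ` would be
bounded by `σ` and cofinal in `j σ > σ`. -/
lemma apply_iSup (h : PreservesLadder c a j) (hc : IsLadder c) {s : ℕ → Ordinal.{v}}
    (hs : StrictMono s) (ha : ⨆ n, s n ≤ a) (hj : ∀ y < ⨆ n, s n, j y < ⨆ n, s n) :
    (⨆ n, s n).cof.ord = Ordinal.omega0 ∧ j (⨆ n, s n) = ⨆ n, s n := by
  have hcof : (⨆ n, s n).cof.ord = Ordinal.omega0 := by
    have := Ordinal.lift_cof_iSup hs
    simp only [Order.cof_nat, Cardinal.lift_aleph0, Cardinal.lift_eq_aleph0] at this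
    rw [this, Cardinal.ord_aleph0]
  refine ⟨hcof, ((h.le_apply ha).eq_of_not_lt fun hlt => ?_).symm⟩
  obtain ⟨η, hη, hle⟩ := hc.cofinal hlt
  rw [← h.cof ha, hcof, h.omega] at hη
  obtain ⟨n, rfl⟩ := Ordinal.lt_omega0.1 hη
  rw [← hcof] at hη
  refine hle.not_gt ?_
  rw [← h.natCast n, ← h.ladder ha hη]
  exact hj _ (hc.lt hη)

/-- The combinatorial core of Kunen's inconsistency theorem for ladder-preserving maps: below a
fixed point nothing is moved. -/
lemma eq_of_apply_le (h : PreservesLadder c a j) (hc : IsLadder c) {θ : Ordinal.{v}} (hθ : θ ≤ a)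
    (hjθ : j θ ≤ θ) {x : Ordinal.{v}} (hx : x ≤ θ) : j x = x := by
  by_contra hne
  have hxlt : x < j x := lt_of_le_of_ne (h.le_apply (hx.trans hθ)) (Ne.symm hne)
  have hxθ : x < θ := by
    refine hx.lt_of_ne ?_
    rintro rfl
    exact hxlt.not_ge hjθ
  have hjlt : ∀ y < θ, j y < θ := fun y hy => (h.mono hy hθ).trans_le hjθ
  -- The critical sequence of `j` starting at `x`.
  let s : ℕ → Ordinal.{v} := fun n => j^[n] x
  have hs0 : s 0 = x := rfl
  have hs_succ : ∀ n, s (n + 1) = j (s n) := fun n => Function.iterate_succ_apply' j n x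
  have hsθ : ∀ n, s n < θ := by
    intro n
    induction n with
    | zero => exact hxθ
    | succ n ih => rw [hs_succ]; exact hjlt _ ih
  have hs_lt : ∀ n, s n < s (n + 1) := by
    intro n
    induction n with
    | zero => exact hxlt
    | succ n ih =>
      rw [hs_succ n, hs_succ (n + 1)]
      exact h.mono ih ((hsθ _).le.trans hθ)
  have hs : StrictMono s := strictMono_nat_of_lt_succ hs_lt
  have hσθ : ⨆ n, s n ≤ θ := Ordinal.iSup_le fun n => (hsθ n).le
  have hsσ : ∀ n, s n < ⨆ n, s n := fun n => (hs_lt n).trans_le (Ordinal.le_iSup s (n + 1))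
  have hσ : ∀ y < ⨆ n, s n, j y < ⨆ n, s n := by
    intro y hy
    obtain ⟨n, hn⟩ := Ordinal.lt_iSup_iff.1 hy
    refine (h.mono hn ((hsθ n).le.trans hθ)).trans ?_
    rw [← hs_succ]
    exact hsσ _
  obtain ⟨hcof, hfix⟩ := h.apply_iSup hc hs (hσθ.trans hθ) hσ
  obtain ⟨η, hη, hle⟩ := hc.cofinal (hsσ 0)
  have hyσ := hc.lt hη
  have hyfix : j (c (⨆ n, s n) η) = c (⨆ n, s n) η := by
    rw [h.ladder (hσθ.trans hθ) hη, hfix]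
    rw [hcof] at hη
    obtain ⟨n, rfl⟩ := Ordinal.lt_omega0.1 hη
    rw [h.natCast]
  -- The fixed point `y` lies between two consecutive terms of the critical sequence.
  generalize c (⨆ n, s n) η = y at *
  have hex : ∃ n, y < s n := Ordinal.lt_iSup_iff.1 hyσ
  classical
  have hk := Nat.find_spec hex
  obtain ⟨k, hk'⟩ : ∃ k, Nat.find hex = k + 1 := by
    refine Nat.exists_eq_succ_of_ne_zero fun h0 => ?_
    rw [h0] at hk
    exact hle.not_gt hk
  have hky : s k ≤ y := not_lt.1 (Nat.find_min hex (by omega))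
  rw [hk', hs_succ] at hk
  rcases hky.eq_or_lt with rfl | hlt
  · exact hk.ne' hyfix
  · exact (h.mono hlt (hyσ.le.trans (hσθ.trans hθ))).not_gt (by rwa [hyfix])

/-- The least ordinal moved by a ladder-preserving map is regular. -/
lemma isRegular_of_least_moved (h : PreservesLadder c a j) (hc : IsLadder c) {lam : Ordinal.{v}}
    (ha : lam ≤ a) (hlt : lam < j lam) (hfix : ∀ x < lam, j x = x)
    (hω : Ordinal.omega0 < lam) : ∃ κ : Cardinal.{v}, κ.IsRegular ∧ κ.ord = lam := by
  have hcof : lam.cof.ord = lam := by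
    refine (Ordinal.ord_cof_le lam).eq_of_not_lt fun hμ => ?_
    obtain ⟨η, hη, hle⟩ := hc.cofinal hlt
    rw [← h.cof ha, hfix _ hμ] at hη
    refine hle.not_gt ?_
    rw [← hfix η (hη.trans hμ), ← h.ladder ha hη, hfix _ (hc.lt hη)]
    exact hc.lt hη
  refine ⟨lam.cof, ⟨?_, ?_⟩, hcof⟩
  · rw [← Cardinal.ord_le_ord, hcof, Cardinal.ord_aleph0]
    exact hω.le
  · rw [hcof]

end PreservesLadder

/-! ### Reflection at a regular cardinal -/

/-- Names of the relations of the structures to which Vopěnka's principle is applied. -/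
inductive RelSym : Type
  | ord | lt | zero | succ | omega | bound | top | ladder | cof | fnH | fnD | fib | relP | relQ

instance : Finite RelSym :=
  Finite.of_injective (fun a => (⟨a.ctorIdx, by cases a <;> decide⟩ : Fin 14)) fun a b h => by
    cases a <;> cases b <;> first | rfl | exact absurd h (by decide)

/-- Data for the reflection lemma: ordinal functions `H`, `D`, small types `E ξ` and binary
relations on them, indexed by a small type of parameters (`P`) or by ordinals (`Q`). -/
structure ReflData (K : Type v) where
  H : Ordinal.{v} → Ordinal.{v}
  D : Ordinal.{v} → Ordinal.{v}
  E : Ordinal.{v} → Type v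
  P : ∀ ξ, K → E ξ → E ξ → Prop
  Q : ∀ ξ, Ordinal.{v} → E ξ → E ξ → Prop

namespace ReflData

variable {K : Type v} (d : ReflData K)

/-- The class-sized structure containing all ordinals and all the elements of the `E ξ`. -/
abbrev Carrier := Ordinal.{v} ⊕ (Σ ξ, d.E ξ)

/-- An ordinal has itself as rank, an element of `E ξ` has rank `ξ`. -/
def rank : d.Carrier → Ordinal.{v}
  | .inl x => x
  | .inr e => e.1

/-- Interpretation of the relation names, given a ladder system `c`, a code `code k` for each
parameter `k`, a bound `b` for the parameters, and a top ordinal `a`. -/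
def rel (c : Ordinal.{v} → Ordinal.{v} → Ordinal.{v}) (code : K → Ordinal.{v}) (b a : Ordinal.{v}) :
    RelSym → d.Carrier → d.Carrier → d.Carrier → Prop
  | .ord, .inl _, _, _ => True
  | .lt, .inl x, .inl y, _ => x < y
  | .zero, .inl x, _, _ => x = 0
  | .succ, .inl x, .inl y, _ => y = Order.succ x
  | .omega, .inl x, _, _ => x = Ordinal.omega0
  | .bound, .inl x, _, _ => x = b
  | .top, .inl x, _, _ => x = a
  | .ladder, .inl ξ, .inl η, .inl x => η < ξ.cof.ord ∧ x = c ξ η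
  | .cof, .inl ξ, .inl x, _ => x = ξ.cof.ord
  | .fnH, .inl ξ, .inl x, _ => x = d.H ξ
  | .fnD, .inl ξ, .inl x, _ => x = d.D ξ
  | .fib, .inr e, .inl ξ, _ => e.1 = ξ
  | .relP, X, Y, Z => ∃ ξ k x y, X = .inr ⟨ξ, x⟩ ∧ Y = .inl (code k) ∧ Z = .inr ⟨ξ, y⟩ ∧ d.P ξ k x y
  | .relQ, X, Y, Z => ∃ ξ η x y, X = .inr ⟨ξ, x⟩ ∧ Y = .inl η ∧ Z = .inr ⟨ξ, y⟩ ∧ d.Q ξ η x y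
  | _, _, _, _ => False

/-- The set-sized structure of all elements of rank at most `a`. -/
abbrev Level (a : Ordinal.{v}) := {x : d.Carrier // d.rank x ≤ a}

instance small_level (a : Ordinal.{v}) : Small.{v} (d.Level a) := by
  let g : d.Level a → Set.Iic a ⊕ (Σ ξ : Set.Iic a, d.E ξ.1) := fun x => match x with
    | ⟨.inl x, h⟩ => .inl ⟨x, h⟩
    | ⟨.inr e, h⟩ => .inr ⟨⟨e.1, h⟩, e.2⟩
  refine small_of_injective (f := g) ?_
  rintro ⟨x | ⟨ξ, e⟩, h⟩ ⟨x' | ⟨ξ', e'⟩, h'⟩ hg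
  · have hx : x = x' := congrArg Subtype.val (Sum.inl.inj hg)
    subst hx
    rfl
  · simp [g] at hg
  · simp [g] at hg
  · obtain ⟨h1, hg⟩ := Sigma.mk.inj_iff.1 (Sum.inr.inj hg)
    have hξ : ξ = ξ' := congrArg Subtype.val h1
    subst hξ
    have he : e = e' := eq_of_heq hg
    subst he
    rfl

end ReflData

/-- The ordinals closed under a function `H` are unbounded. -/
lemma not_bddAbove_closed (H : Ordinal.{v} → Ordinal.{v}) (b : Ordinal.{v}) :
    ¬ BddAbove {x : Ordinal.{v} | b ≤ x ∧ ∀ δ < x, H δ < x} := by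
  rintro ⟨B, hB⟩
  let g : Ordinal.{v} → Ordinal.{v} := fun x =>
    max (Order.succ x) (⨆ δ : Set.Iio x, Order.succ (H δ.1))
  have hg : ∀ x, x < g x := fun x => (Order.lt_succ x).trans_le (le_max_left _ _)
  have hgH : ∀ x, ∀ δ < x, H δ < g x := fun x δ hδ =>
    (Order.lt_succ _).trans_le ((Ordinal.le_iSup (fun δ : Set.Iio x => Order.succ (H δ.1))
      ⟨δ, hδ⟩).trans (le_max_right _ _))
  let s : ℕ → Ordinal.{v} := fun n => g^[n] (max b (Order.succ B))
  have hs_succ : ∀ n, s (n + 1) = g (s n) := fun n => Function.iterate_succ_apply' g n _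
  have hle : ∀ n, s n ≤ ⨆ n, s n := fun n => Ordinal.le_iSup s n
  have h0 : max b (Order.succ B) ≤ ⨆ n, s n := hle 0
  have := hB (a := ⨆ n, s n) ⟨(le_max_left _ _).trans h0, fun δ hδ => by
    obtain ⟨n, hn⟩ := Ordinal.lt_iSup_iff.1 hδ
    refine (hgH _ δ hn).trans_le ?_
    rw [← hs_succ]
    exact hle _⟩
  exact (Order.lt_succ B).not_ge (((le_max_right _ _).trans h0).trans this)

/-- Reflection: the critical point `lam` of a homomorphism between two structures of the class
`ReflData.Level` is the ordinal of a regular cardinal closed under `H`, and the homomorphism sends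
the fibre over `lam` to the fibre over a larger ordinal `lam'`, respecting all the data below
`lam`. -/
lemma reflection (vp : VopenkaPrinciple.{v}) {K : Type v} (d : ReflData K) (ν : Ordinal.{v}) :
    ∃ lam lam' : Ordinal.{v}, ν < lam ∧ lam < lam' ∧
      (∃ κ : Cardinal.{v}, κ.IsRegular ∧ κ.ord = lam) ∧ (∀ δ < lam, d.H δ < lam) ∧
      (d.D lam < lam → d.D lam' = d.D lam) ∧
      ∃ f : d.E lam → d.E lam', (∀ k x y, d.P lam k x y → d.P lam' k (f x) (f y)) ∧
        ∀ η < lam, ∀ x y, d.Q lam η x y → d.Q lam' η (f x) (f y) := by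
  classical
  obtain ⟨c, hc⟩ := exists_isLadder.{v}
  let code : K → Ordinal.{v} := fun k => Ordinal.typein WellOrderingRel k
  have code_inj : Function.Injective code := Ordinal.typein_injective _
  let b : Ordinal.{v} := max (max ν Ordinal.omega0) (⨆ k, code k)
  have hν : ν ≤ b := (le_max_left _ _).trans (le_max_left _ _)
  have hω : Ordinal.omega0 ≤ b := (le_max_right _ _).trans (le_max_left _ _)
  have hcode : ∀ k, code k ≤ b := fun k => (Ordinal.le_iSup code k).trans (le_max_right _ _)
  have hS := not_bddAbove_closed d.H b
  let e : Ordinal.{v} → Ordinal.{v} :=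
    Ordinal.enumOrd {x : Ordinal.{v} | b ≤ x ∧ ∀ δ < x, d.H δ < x}
  obtain ⟨α, β, hne, f, hf⟩ := vopenka_ternary vp (fun α => d.Level (e α))
    (fun α k x y z => d.rel c code b (e α) k x.1 y.1 z.1)
  have hne' : e α ≠ e β := (Ordinal.enumOrd_injective hS).ne hne
  obtain ⟨hbα, hHα⟩ := Ordinal.enumOrd_mem hS α
  change b ≤ e α at hbα
  change ∀ δ < e α, d.H δ < e α at hHα
  generalize e α = a at *
  generalize e β = a' at *
  -- The action of the homomorphism on ordinals.
  have hj : ∀ x, ∃ y, ∀ h : x ≤ a, (f ⟨.inl x, h⟩).1 = .inl y := by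
    intro x
    by_cases h : x ≤ a
    · have := hf .ord ⟨.inl x, h⟩ ⟨.inl x, h⟩ ⟨.inl x, h⟩ trivial
      rcases hx : (f ⟨.inl x, h⟩).1 with y | y
      · exact ⟨y, fun _ => hx⟩
      · simp only [hx] at this
        exact this.elim
    · exact ⟨0, fun h' => absurd h' h⟩
  choose j hj using hj
  have mono : ∀ {x y}, x < y → y ≤ a → j x < j y := fun {x y} hxy hy => by
    have := hf .lt ⟨.inl x, hxy.le.trans hy⟩ ⟨.inl y, hy⟩ ⟨.inl y, hy⟩ hxy
    simp only [hj] at this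
    exact this
  have hj_un : ∀ (k : RelSym) (x : Ordinal.{v}) (hx : x ≤ a),
      d.rel c code b a k (.inl x) (.inl x) (.inl x) →
      d.rel c code b a' k (.inl (j x)) (.inl (j x)) (.inl (j x)) := fun k x hx h => by
    have := hf k ⟨.inl x, hx⟩ ⟨.inl x, hx⟩ ⟨.inl x, hx⟩ h
    simpa only [hj] using this
  have hj_bin : ∀ (k : RelSym) (x y : Ordinal.{v}) (_ : x ≤ a) (_ : y ≤ a),
      d.rel c code b a k (.inl x) (.inl y) (.inl y) →
      d.rel c code b a' k (.inl (j x)) (.inl (j y)) (.inl (j y)) := fun k x y hx hy h => by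
    have := hf k ⟨.inl x, hx⟩ ⟨.inl y, hy⟩ ⟨.inl y, hy⟩ h
    simpa only [hj] using this
  have hpres : PreservesLadder c a j :=
    { omega_le := hω.trans hbα
      mono := mono
      zero := hj_un .zero 0 zero_le rfl
      succ := fun {x} hx => hj_bin .succ x (Order.succ x) hx.le (Order.succ_le_of_lt hx) rfl
      omega := hj_un .omega _ (hω.trans hbα) rfl
      cof := fun {ξ} hξ => hj_bin .cof ξ _ hξ ((Ordinal.ord_cof_le ξ).trans hξ) rfl
      ladder := fun {ξ η} hξ hη => by
        have := hf .ladder ⟨.inl ξ, hξ⟩ ⟨.inl η, (hη.le.trans (Ordinal.ord_cof_le ξ)).trans hξ⟩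
          ⟨.inl (c ξ η), (hc.lt hη).le.trans hξ⟩ ⟨hη, rfl⟩
        simp only [hj] at this
        exact this.2 }
  have htop : j a = a' := hj_un .top a le_rfl rfl
  have hb : j b = b := hj_un .bound b hbα rfl
  have hex : ∃ x, x ≤ a ∧ x < j x := by
    refine ⟨a, le_rfl, ?_⟩
    have := hpres.le_apply (x := a) le_rfl
    rw [htop] at this ⊢
    exact lt_of_le_of_ne this hne'
  obtain ⟨lam, ⟨hla, hlt⟩, hmin⟩ := WellFounded.has_min (wellFounded_lt (α := Ordinal.{v}))
    {x | x ≤ a ∧ x < j x} hex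
  have hfix : ∀ x < lam, j x = x := fun x hx =>
    ((hpres.le_apply (hx.le.trans hla)).eq_of_not_lt
      fun h => hmin x ⟨hx.le.trans hla, h⟩ hx).symm
  -- Every ordinal from `lam` on is moved upwards; this bounds the ordinals which are known to be
  -- fixed, such as the values of `H` below `lam`.
  have hmoved : ∀ θ ≤ a, j θ ≤ θ → θ < lam := fun θ hθ h => by
    by_contra! hle
    exact hlt.ne' (hpres.eq_of_apply_le hc hθ h hle)
  have hblam : b < lam := hmoved b hbα hb.le
  have hfib : ∀ x : d.E lam, ∃ y : d.E (j lam), (f ⟨.inr ⟨lam, x⟩, hla⟩).1 = .inr ⟨j lam, y⟩ := by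
    intro x
    have := hf .fib ⟨.inr ⟨lam, x⟩, hla⟩ ⟨.inl lam, hla⟩ ⟨.inl lam, hla⟩ rfl
    simp only [hj] at this
    rcases hx : (f ⟨.inr ⟨lam, x⟩, hla⟩).1 with y | ⟨ξ, y⟩
    · rw [hx] at this
      exact this.elim
    · rw [hx] at this
      have h' : ξ = j lam := this
      subst h'
      exact ⟨y, rfl⟩
  choose g hg using hfib
  refine ⟨lam, j lam, hν.trans_lt hblam, hlt,
    hpres.isRegular_of_least_moved hc hla hlt hfix (hω.trans_lt hblam), ?_, ?_, g, ?_, ?_⟩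
  · intro δ hδ
    have hle : d.H δ ≤ a := (hHα δ (hδ.trans_le hla)).le
    refine hmoved _ hle ?_
    have : j (d.H δ) = d.H (j δ) := hj_bin .fnH δ _ (hδ.le.trans hla) hle rfl
    rw [this, hfix δ hδ]
  · intro h
    have : j (d.D lam) = d.D (j lam) := hj_bin .fnD lam _ hla (h.le.trans hla) rfl
    rw [← this, hfix _ h]
  · intro k x y hP
    have hk : code k < lam := (hcode k).trans_lt hblam
    have := hf .relP ⟨.inr ⟨lam, x⟩, hla⟩ ⟨.inl (code k), hk.le.trans hla⟩ ⟨.inr ⟨lam, y⟩, hla⟩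
      ⟨lam, k, x, y, rfl, rfl, rfl, hP⟩
    rw [hg, hg, hj, hfix _ hk] at this
    obtain ⟨ξ, k', x', y', h1, h2, h3, h4⟩ := this
    obtain rfl := code_inj (Sum.inl.inj h2)
    obtain ⟨rfl, h1⟩ := Sigma.mk.inj_iff.1 (Sum.inr.inj h1)
    obtain ⟨-, h3⟩ := Sigma.mk.inj_iff.1 (Sum.inr.inj h3)
    rwa [eq_of_heq h1, eq_of_heq h3]
  · intro η hη x y hQ
    have := hf .relQ ⟨.inr ⟨lam, x⟩, hla⟩ ⟨.inl η, hη.le.trans hla⟩ ⟨.inr ⟨lam, y⟩, hla⟩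
      ⟨lam, η, x, y, rfl, rfl, rfl, hQ⟩
    rw [hg, hg, hj, hfix _ hη] at this
    obtain ⟨ξ, η', x', y', h1, h2, h3, h4⟩ := this
    obtain rfl := Sum.inl.inj h2
    obtain ⟨rfl, h1⟩ := Sigma.mk.inj_iff.1 (Sum.inr.inj h1)
    obtain ⟨-, h3⟩ := Sigma.mk.inj_iff.1 (Sum.inr.inj h3)
    rwa [eq_of_heq h1, eq_of_heq h3]

/-! ### Presentability and dense families -/

lemma cardFiltered_iff {κ : Cardinal.{v}} [Fact κ.IsRegular] {J : Type u₁} [Category.{v₁} J] :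
    CardFiltered κ J ↔ IsCardinalFiltered J κ :=
  ⟨fun h => ⟨fun {A} _ F hA => h A (by rwa [hasCardinalLT_iff_cardinal_mk_lt] at hA) F⟩,
    fun h A _ hA F => h.nonempty_cocone F (by rwa [hasCardinalLT_iff_cardinal_mk_lt])⟩

lemma isCardinalPresentable_iff {κ : Cardinal.{v}} [Fact κ.IsRegular] {X : M} :
    IsCardinalPresentable κ X ↔ CategoryTheory.IsCardinalPresentable X κ := by
  refine ⟨fun h => ⟨fun J _ hJ => ⟨fun {D} => ⟨fun {c} hc => ?_⟩⟩⟩, fun h J _ hJ D c hc => ?_⟩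
  · exact h J (cardFiltered_iff.2 hJ) D c hc
  · have := cardFiltered_iff.1 hJ
    have := preservesColimitsOfShape_of_isCardinalPresentable X κ J
    exact ⟨isColimitOfPreserves (coyoneda.obj (op X)) hc⟩

/-- A morphism from a presentable object to a filtered colimit factors through the diagram. -/
lemma IsCardinalPresentable.exists_factor {κ : Cardinal.{v}} {X : M}
    (hX : IsCardinalPresentable κ X) {J : Type v} [SmallCategory J] (hJ : CardFiltered κ J)
    {D : J ⥤ M} {c : Cocone D} (hc : IsColimit c) (f : X ⟶ c.pt) :
    ∃ (j : J) (p : X ⟶ D.obj j), p ≫ c.ι.app j = f :=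
  Types.jointly_surjective_of_isColimit (hX J hJ D c hc).some f

/-- Every object of a preaccessible category is `κ`-presentable for all large regular `κ`. -/
lemma Preaccessible.exists_presentable (hM : Preaccessible.{v} M) (X : M) :
    ∃ μ : Cardinal.{v}, ∀ κ : Cardinal.{v}, κ.IsRegular → μ ≤ κ → IsCardinalPresentable κ X := by
  obtain ⟨lam, hlam, A, -, hA, hcolim⟩ := hM
  obtain ⟨J, hJ, D, hD, c, ⟨hc⟩, rfl⟩ := hcolim X
  refine ⟨max lam (Order.succ (Cardinal.mk (Arrow J))), fun κ hκ hle => ?_⟩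
  have : Fact κ.IsRegular := ⟨hκ⟩
  have : Fact lam.IsRegular := ⟨hlam⟩
  rw [isCardinalPresentable_iff]
  have hDj : ∀ j, CategoryTheory.IsCardinalPresentable (D.obj j) κ := fun j => by
    have := isCardinalPresentable_iff.1 (hA _ (hD j))
    exact isCardinalPresentable_of_le _ ((le_max_left _ _).trans hle)
  refine isCardinalPresentable_of_isColimit' c hc κ ?_
  rw [hasCardinalLT_iff_cardinal_mk_lt]
  exact (Order.lt_succ _).trans_le ((le_max_right _ _).trans hle)

/-- A family of objects `o` is dense: morphisms `X ⟶ Y` correspond to natural transformations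
between the presheaves of morphisms from the objects of `o` to `X` and `Y`. -/
structure IsDense {K : Type v} (o : K → M) : Prop where
  hom_ext : ∀ {X Y : M} {f g : X ⟶ Y}, (∀ k (x : o k ⟶ X), x ≫ f = x ≫ g) → f = g
  exists_hom : ∀ {X Y : M} (τ : ∀ k, (o k ⟶ X) → (o k ⟶ Y)),
    (∀ k k' (a : o k ⟶ o k') (x : o k' ⟶ X), τ k (a ≫ x) = a ≫ τ k' x) →
    ∃ m : X ⟶ Y, ∀ k x, x ≫ m = τ k x

/-- A preaccessible category has a small dense family. -/
lemma Preaccessible.exists_isDense (hM : Preaccessible.{v} M) :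
    ∃ (K : Type v) (o : K → M), IsDense o := by
  obtain ⟨lam, hlam, A, hsmall, hA, hcolim⟩ := hM
  let o : Shrink.{v} A → M := fun k => ((equivShrink A).symm k).1
  have ho : ∀ k, IsCardinalPresentable lam (o k) := fun k => hA _ ((equivShrink A).symm k).2
  have he : ∀ a ∈ A, ∃ k, Nonempty (a ≅ o k) := fun a ha =>
    ⟨equivShrink A ⟨a, ha⟩, ⟨eqToIso (by simp [o])⟩⟩
  refine ⟨_, o, ⟨?_, ?_⟩⟩
  · intro X Y f g h
    obtain ⟨J, hJ, D, hD, c, ⟨hc⟩, rfl⟩ := hcolim X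
    refine hc.hom_ext fun j => ?_
    obtain ⟨k, ⟨e⟩⟩ := he _ (hD j)
    have := h k (e.inv ≫ c.ι.app j)
    simpa using this
  · intro X Y τ hτ
    obtain ⟨J, hJ, D, hD, c, ⟨hc⟩, rfl⟩ := hcolim X
    choose k e using fun j => he _ (hD j)
    let e' := fun j => (e j).some
    let s : Cocone D :=
      { pt := Y
        ι :=
          { app := fun j => (e' j).hom ≫ τ (k j) ((e' j).inv ≫ c.ι.app j)
            naturality := fun i j u => by
              have h1 := hτ _ _ ((e' i).inv ≫ D.map u ≫ (e' j).hom) ((e' j).inv ≫ c.ι.app j)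
              have h2 : ((e' i).inv ≫ D.map u ≫ (e' j).hom) ≫ (e' j).inv ≫ c.ι.app j =
                  (e' i).inv ≫ c.ι.app i := by simp
              rw [h2] at h1
              simp [h1] } }
    refine ⟨hc.desc s, fun l x => ?_⟩
    obtain ⟨j, p, rfl⟩ := (ho l).exists_factor hJ hc x
    have h1 := hτ _ _ (p ≫ (e' j).hom) ((e' j).inv ≫ c.ι.app j)
    rw [Category.assoc, hc.fac]
    simp only [Category.assoc, Iso.hom_inv_id_assoc] at h1
    exact h1.symm

/-- The elements of `X` with respect to a family of objects `o`: morphisms from a member of the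
family to `X`. -/
abbrev El {K : Type v} (o : K → M) (X : M) : Type v := Σ k, (o k ⟶ X)

/-- The morphism `g : Y ⟶ X` is injective on elements, and its image contains `S`. -/
structure Covers {K : Type v} (o : K → M) {X Y : M} (g : Y ⟶ X) (S : Set (El o X)) : Prop where
  inj : ∀ {k} {x x' : o k ⟶ Y}, x ≫ g = x' ≫ g → x = x'
  lift : ∀ {k} {x : o k ⟶ X}, ⟨k, x⟩ ∈ S → ∃ y : o k ⟶ Y, y ≫ g = x

section Covers

variable {K : Type v} {o : K → M}

lemma Covers.anti {X Y : M} {g : Y ⟶ X} {S S' : Set (El o X)} (h : Covers o g S) (hS : S' ⊆ S) :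
    Covers o g S' :=
  ⟨h.inj, fun hx => h.lift (hS hx)⟩

/-- A morphism whose image lies in the image of a covering morphism factors through it. -/
lemma Covers.exists_factor (ho : IsDense o) {W X Y : M} {g : Y ⟶ X} {S : Set (El o X)}
    (h : Covers o g S) (p : W ⟶ X) (hp : ∀ k (x : o k ⟶ W), ⟨k, x ≫ p⟩ ∈ S) :
    ∃ m : W ⟶ Y, m ≫ g = p := by
  choose τ hτ using fun k (x : o k ⟶ W) => h.lift (hp k x)
  obtain ⟨m, hm⟩ := ho.exists_hom τ fun k k' a x => h.inj (by simp [hτ])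
  exact ⟨m, ho.hom_ext fun k x => by rw [← Category.assoc, hm, hτ]⟩

lemma Covers.cancel (ho : IsDense o) {W X Y : M} {g : Y ⟶ X} {S : Set (El o X)}
    (h : Covers o g S) {m m' : W ⟶ Y} (hm : m ≫ g = m' ≫ g) : m = m' :=
  ho.hom_ext fun k x => h.inj (by simp [hm])

/-- The subobjects of `X` (morphisms injective on elements) with domain in the family `Z`. -/
structure Sub (o : K → M) {T : Type v} (Z : T → M) (X : M) : Type v where
  idx : T
  hom : Z idx ⟶ X
  covers : Covers o hom ∅

variable {T : Type v} {Z : T → M} {X : M}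

instance : SmallCategory (Sub o Z X) where
  Hom a b := {m : Z a.idx ⟶ Z b.idx // m ≫ b.hom = a.hom}
  id a := ⟨𝟙 _, by simp⟩
  comp f g := ⟨f.1 ≫ g.1, by rw [Category.assoc, g.2, f.2]⟩

/-- The tautological cocone over the diagram of subobjects of `X`. -/
def Sub.cocone (o : K → M) (Z : T → M) (X : M) :
    Cocone ({ obj := fun a => Z a.idx, map := fun f => f.1 } : Sub o Z X ⥤ M) where
  pt := X
  ι := { app := fun a => a.hom, naturality := fun _ _ f =>
           f.2.trans (Category.comp_id _).symm }

/-- If every set of fewer than `κ` elements of a `κ`-presentable object `X` is covered by an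
object of the family `Z`, and the objects of `Z` have fewer than `κ` elements, then `X` is a
retract of an object of `Z`: it is the `κ`-filtered colimit of its subobjects from `Z`. -/
lemma exists_retract (ho : IsDense o) {κ : Cardinal.{v}} (hκ : κ.IsRegular)
    (hZ : ∀ t, Cardinal.mk (El o (Z t)) < κ) (hX : IsCardinalPresentable κ X)
    (hcov : ∀ S : Set (El o X), Cardinal.mk S < κ → ∃ t, ∃ g : Z t ⟶ X, Covers o g S) :
    ∃ t, Nonempty (Retract X (Z t)) := by
  -- Any small set of subobjects and elements of `X` is dominated by a single subobject.
  have hdir : ∀ (A : Type v) (_ : Cardinal.mk A < κ) (F : A → Sub o Z X),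
      ∃ b : Sub o Z X, ∀ a, Nonempty (F a ⟶ b) := by
    intro A hA F
    let S : Set (El o X) :=
      Set.range fun e : Σ a, El o (Z (F a).idx) => ⟨e.2.1, e.2.2 ≫ (F e.1).hom⟩
    have hS : Cardinal.mk S < κ := by
      refine Cardinal.mk_range_le.trans_lt ?_
      rw [Cardinal.mk_sigma]
      exact Cardinal.sum_lt_of_isRegular hκ hA fun a => hZ _
    obtain ⟨t, g, hg⟩ := hcov S hS
    refine ⟨⟨t, g, hg.anti (Set.empty_subset _)⟩, fun a => ?_⟩
    obtain ⟨m, hm⟩ := hg.exists_factor ho (F a).hom fun k x => ⟨⟨a, ⟨k, x⟩⟩, rfl⟩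
    exact ⟨⟨m, hm⟩⟩
  have hthin : ∀ {a b : Sub o Z X} (f g : a ⟶ b), f = g := fun {a b} f g =>
    Subtype.ext (b.covers.cancel ho (f.2.trans g.2.symm))
  have hfilt : CardFiltered κ (Sub o Z X) := by
    intro A _ hA F
    have hA' : Cardinal.mk A < κ :=
      (Cardinal.mk_le_of_injective (f := fun a : A => Arrow.mk (𝟙 a))
        fun a b h => congrArg Comma.left h).trans_lt hA
    obtain ⟨b, hb⟩ := hdir A hA' F.obj
    exact ⟨{ pt := b, ι := { app := fun a => (hb a).some, naturality := fun _ _ _ => hthin _ _ } }⟩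
  have hel : ∀ (k : K) (x : o k ⟶ X), ∃ (a : Sub o Z X) (y : o k ⟶ Z a.idx), y ≫ a.hom = x := by
    intro k x
    obtain ⟨t, g, hg⟩ := hcov {⟨k, x⟩} (by
      rw [Cardinal.mk_singleton]
      exact Cardinal.one_lt_aleph0.trans_le hκ.aleph0_le)
    obtain ⟨y, hy⟩ := hg.lift rfl
    exact ⟨⟨t, g, hg.anti (Set.empty_subset _)⟩, y, hy⟩
  have hcolim : Nonempty (IsColimit (Sub.cocone o Z X)) := by
    have hdesc : ∀ s : Cocone ({ obj := fun a => Z a.idx, map := fun f => f.1 } : Sub o Z X ⥤ M),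
        ∃ m : X ⟶ s.pt, ∀ a, (Sub.cocone o Z X).ι.app a ≫ m = s.ι.app a := by
      intro s
      -- The value of the cocone at an element of `X` does not depend on the chosen subobject.
      have hwd : ∀ {k} {a b : Sub o Z X} (y : o k ⟶ Z a.idx) (y' : o k ⟶ Z b.idx),
          y ≫ a.hom = y' ≫ b.hom → y ≫ s.ι.app a = y' ≫ s.ι.app b := by
        intro k a b y y' h
        obtain ⟨c, hc⟩ := hdir (ULift Bool)
          ((Cardinal.lt_aleph0_of_finite _).trans_le hκ.aleph0_le) fun i => bif i.down then a else b
        obtain ⟨f⟩ := hc ⟨true⟩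
        obtain ⟨g⟩ := hc ⟨false⟩
        change a ⟶ c at f
        change b ⟶ c at g
        have hfg : y ≫ f.1 = y' ≫ g.1 := c.covers.inj (by
          rw [Category.assoc, Category.assoc, f.2, g.2, h])
        rw [← s.w f, ← s.w g]
        change y ≫ f.1 ≫ _ = y' ≫ g.1 ≫ _
        rw [← Category.assoc, hfg, Category.assoc]
      choose a y hy using hel
      obtain ⟨m, hm⟩ := ho.exists_hom (fun k x => y k x ≫ s.ι.app (a k x)) fun k k' v x => by
        rw [← Category.assoc]
        exact hwd _ _ (by rw [Category.assoc, hy, hy])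
      refine ⟨m, fun b => ho.hom_ext fun k x => ?_⟩
      exact (Category.assoc _ _ _).symm.trans ((hm _ _).trans (hwd _ _ (hy _ _)))
    choose m hm using hdesc
    exact ⟨{ desc := m, fac := hm, uniq := fun s m' hm' => ho.hom_ext fun k x => by
               obtain ⟨a, y, rfl⟩ := hel k x
               have h1 := hm s a
               have h2 := hm' a
               change a.hom ≫ _ = _ at h1 h2
               exact (Category.assoc y a.hom m').trans ((congrArg (y ≫ ·) (h2.trans h1.symm)).trans
                 (Category.assoc y a.hom (m s)).symm) }⟩
  obtain ⟨a, p, hp⟩ := hX.exists_factor hfilt hcolim.some (𝟙 X)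
  exact ⟨a.idx, ⟨⟨p, a.hom, hp⟩⟩⟩

end Covers

/-! ### The greedy sequence of uncovered data -/

/-- Greedy choice along the ordinals: at each stage `ξ` some `d` of rank below `ξ` not related to
any earlier choice is selected, and nothing is selected only if there is no such `d`. -/
lemma exists_greedy {D : Type w} (δ : D → Ordinal.{v}) (R : D → D → Prop) :
    ∃ data : Ordinal.{v} → Option D, ∀ ξ,
      (∀ d, data ξ = some d → δ d < ξ ∧ ∀ ζ < ξ, ∀ d', data ζ = some d' → ¬ R d d') ∧
      (data ξ = none → ∀ d, δ d < ξ → ∃ ζ < ξ, ∃ d', data ζ = some d' ∧ R d d') := by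
  classical
  let good : ∀ ξ : Ordinal.{v}, (∀ ζ, ζ < ξ → Option D) → D → Prop := fun ξ prev d =>
    δ d < ξ ∧ ∀ ζ (h : ζ < ξ) d', prev ζ h = some d' → ¬ R d d'
  let step : ∀ ξ : Ordinal.{v}, (∀ ζ, ζ < ξ → Option D) → Option D := fun ξ prev =>
    if h : ∃ d, good ξ prev d then some h.choose else none
  let data : Ordinal.{v} → Option D := WellFounded.fix Ordinal.lt_wf step
  have hdata : ∀ ξ, data ξ = step ξ fun ζ _ => data ζ := fun ξ => WellFounded.fix_eq _ _ _
  refine ⟨data, fun ξ => ?_⟩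
  by_cases h : ∃ d, good ξ (fun ζ _ => data ζ) d
  · have h1 : data ξ = some h.choose := (hdata ξ).trans (dif_pos h)
    refine ⟨fun d hd => ?_, fun h0 => ?_⟩
    · obtain rfl : h.choose = d := Option.some.inj (h1.symm.trans hd)
      exact h.choose_spec
    · rw [h1] at h0
      cases h0
  · have h1 : data ξ = none := (hdata ξ).trans (dif_neg h)
    refine ⟨fun d hd => ?_, fun _ d hd => ?_⟩
    · rw [h1] at hd
      cases hd
    · by_contra hc
      exact h ⟨d, hd, fun ζ hζ d' hd' hR => hc ⟨ζ, hζ, d', hd', hR⟩⟩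

section Datum

variable {I : Type v} {Mi : I → Type u} [∀ i, Category.{v} (Mi i)] {K : I → Type v}

/-- An object `X` of one of the categories `Mi i`, together with a set of elements of `X`
presented as the values of a partial sequence `s` at the ordinals below `δ`. -/
structure Datum (o : ∀ i, K i → Mi i) : Type max u (v + 1) where
  i : I
  X : Mi i
  δ : Ordinal.{v}
  s : Ordinal.{v} → Option (El (o i) X)

variable {o : ∀ i, K i → Mi i}

namespace Datum

/-- The set of elements enumerated by a datum. -/
def S (d : Datum o) : Set (El (o d.i) d.X) := {e | ∃ η < d.δ, d.s η = some e}

/-- `d.IsOb i Y` says that `d.i = i` and that `Y` is the object of `d`. -/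
inductive IsOb (d : Datum o) : ∀ i, Mi i → Prop
  | mk : IsOb d d.i d.X

lemma IsOb.unique {d : Datum o} {i : I} {Y Y' : Mi i} (h : d.IsOb i Y) (h' : d.IsOb i Y') :
    Y = Y' := by
  cases h
  cases h'
  rfl

/-- The elements of `d` are covered by a morphism from the object of `d'`. -/
def CoveredBy (d d' : Datum o) : Prop :=
  ∃ Y, d'.IsOb d.i Y ∧ ∃ g : Y ⟶ d.X, Covers (o d.i) g d.S

end Datum

/-- Names of the relations by which data are compared: the index of the category, the action of
morphisms between members of the dense family, and inequality. -/
inductive Param (o : ∀ i, K i → Mi i) : Type v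
  | tag (i : I)
  | act (i : I) (k k' : K i) (a : o i k ⟶ o i k')
  | ne

/-- The relational structure of a datum, on its set of elements with an extra point `none`. -/
inductive Datum.P (d : Datum o) :
    Param o → Option (El (o d.i) d.X) → Option (El (o d.i) d.X) → Prop
  | tag : P d (.tag d.i) none none
  | act (k k' : K d.i) (a : o d.i k ⟶ o d.i k') (g : o d.i k' ⟶ d.X) :
      P d (.act d.i k k' a) (some ⟨k', g⟩) (some ⟨k, a ≫ g⟩)
  | ne (x y : Option (El (o d.i) d.X)) : x ≠ y → P d .ne x y

lemma Datum.P.of_act {d : Datum o} {k k' : K d.i} {a : o d.i k ⟶ o d.i k'}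
    {x y : Option (El (o d.i) d.X)} (h : d.P (.act d.i k k' a) x y) :
    ∃ g : o d.i k' ⟶ d.X, x = some ⟨k', g⟩ ∧ y = some ⟨k, a ≫ g⟩ := by
  cases h with
  | act _ _ _ g => exact ⟨g, rfl, rfl⟩

lemma Datum.P.index_eq {d : Datum o} {i : I} {x y : Option (El (o d.i) d.X)}
    (h : d.P (.tag i) x y) : d.i = i ∧ x = none := by
  cases h
  exact ⟨rfl, rfl⟩

lemma Datum.P.ne_of {d : Datum o} {x y : Option (El (o d.i) d.X)} (h : d.P .ne x y) : x ≠ y := by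
  cases h
  assumption

/-- A homomorphism from `d` to `d'` comes, by density, from a morphism of objects which is
injective on elements; if it also carries the sequence of `d` to that of `d'`, the elements of
`d'` are covered. -/
lemma Datum.coveredBy_of_hom (ho : ∀ i, IsDense (o i)) {d d' : Datum o}
    (f : Option (El (o d.i) d.X) → Option (El (o d'.i) d'.X))
    (hP : ∀ k x y, d.P k x y → d'.P k (f x) (f y))
    (hs : ∀ η < d'.δ, d'.s η = f (d.s η)) : d'.CoveredBy d := by
  obtain ⟨i, X, δ, s⟩ := d
  obtain ⟨i', X', δ', s'⟩ := d'
  obtain ⟨hi, hnone⟩ := (hP _ _ _ .tag).index_eq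
  change i' = i at hi
  subst hi
  have hinj : Function.Injective f := fun x y h => by
    by_contra hne
    exact (hP _ _ _ (.ne x y hne)).ne_of h
  have hact : ∀ {k k' : K i'} (a : o i' k ⟶ o i' k') (g : o i' k' ⟶ X),
      ∃ g' : o i' k' ⟶ X', f (some ⟨k', g⟩) = some ⟨k', g'⟩ ∧
        f (some ⟨k, a ≫ g⟩) = some ⟨k, a ≫ g'⟩ :=
    fun a g => (hP _ _ _ (.act _ _ a g)).of_act
  choose τ hτ using fun k (g : o i' k ⟶ X) => hact (𝟙 _) g
  replace hτ : ∀ k (g : o i' k ⟶ X), f (some ⟨k, g⟩) = some ⟨k, τ k g⟩ := fun k g => (hτ k g).1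
  have some_inj : ∀ {Y : Mi i'} {k : K i'} {g g' : o i' k ⟶ Y},
      (some ⟨k, g⟩ : Option (El (o i') Y)) = some ⟨k, g'⟩ → g = g' := fun h =>
    eq_of_heq (Sigma.mk.inj (Option.some.inj h)).2
  obtain ⟨m, hm⟩ := (ho i').exists_hom τ fun k k' a g => by
    obtain ⟨g', h1, h2⟩ := hact a g
    rw [hτ] at h1 h2
    rw [some_inj h1, some_inj h2]
  refine ⟨X, .mk, m, ⟨fun {k x x'} h => ?_, fun {k x} hx => ?_⟩⟩
  · rw [hm, hm] at h
    refine some_inj (hinj ?_)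
    rw [hτ, hτ, h]
  · obtain ⟨η, hη, hx⟩ := hx
    have h1 : s' η = f (s η) := hs η hη
    change s' η = _ at hx
    rw [hx] at h1
    cases h2 : s η with
    | none =>
      change f none = none at hnone
      rw [h2, hnone] at h1
      cases h1
    | some e =>
      obtain ⟨k', y⟩ := e
      rw [h2, hτ] at h1
      cases Option.some.inj h1
      exact ⟨y, hm k y⟩

/-- The structure attached to an optional datum; it is empty if there is no datum. -/
def OptE : Option (Datum o) → Type v
  | none => PEmpty
  | some d => Option (El (o d.i) d.X)

/-- The relations of the structure attached to an optional datum. -/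
def OptP : ∀ a : Option (Datum o), Param o → OptE a → OptE a → Prop
  | none => fun _ _ _ => False
  | some d => d.P

/-- The `η`-th member of the sequence of an optional datum, coded as a relation. -/
def OptQ : ∀ a : Option (Datum o), Ordinal.{v} → OptE a → OptE a → Prop
  | none => fun _ _ _ => False
  | some d => fun η x y => x = none ∧ y = d.s η

/-- There is a regular cardinal `κ` above `ν` and a `κ.ord`-indexed sequence of data covering every
datum of length less than `κ.ord`, such that the members of the sequence have `H`-invariant less
than `κ.ord`. -/
lemma exists_covering_cardinal (vp : VopenkaPrinciple.{v}) (ho : ∀ i, IsDense (o i))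
    (H : Datum o → Ordinal.{v}) (ν : Ordinal.{v}) :
    ∃ κ : Cardinal.{v}, κ.IsRegular ∧ ν < κ.ord ∧ ∃ data : Ordinal.{v} → Option (Datum o),
      (∀ ζ < κ.ord, ∀ d, data ζ = some d → H d < κ.ord) ∧
      ∀ d : Datum o, d.δ < κ.ord → ∃ ζ < κ.ord, ∃ d', data ζ = some d' ∧ d.CoveredBy d' := by
  obtain ⟨data, hdata⟩ := exists_greedy (fun d : Datum o => d.δ) Datum.CoveredBy
  let R : ReflData (Param o) :=
    { H := fun ξ => (data ξ).elim 0 H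
      D := fun ξ => (data ξ).elim 0 fun d => d.δ
      E := fun ξ => OptE (data ξ)
      P := fun ξ => OptP (data ξ)
      Q := fun ξ => OptQ (data ξ) }
  obtain ⟨lam, lam', hν, hlt, ⟨κ, hκ, rfl⟩, hH, hD, f, hfP, hfQ⟩ := reflection vp R ν
  refine ⟨κ, hκ, hν, data, fun ζ hζ d hd => ?_, (hdata _).2 ?_⟩
  · have := hH ζ hζ
    simpa only [R, hd, Option.elim_some] using this
  -- A datum chosen at stage `κ.ord` would cover the one chosen at stage `lam'`.
  by_contra hne
  obtain ⟨d, hd⟩ := Option.ne_none_iff_exists'.1 hne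
  have hδ : d.δ < κ.ord := ((hdata _).1 d hd).1
  cases hd' : data lam' with
  | none =>
    simp only [R] at f
    rw [hd, hd'] at f
    exact (f (none : Option _)).elim
  | some d' =>
    refine ((hdata _).1 d' hd').2 _ hlt d hd ?_
    simp only [R] at f hfP hfQ hD
    generalize data κ.ord = a at *
    generalize data lam' = a' at *
    subst hd hd'
    have hδ' : d'.δ = d.δ := hD hδ
    refine Datum.coveredBy_of_hom ho f hfP fun η hη => ?_
    rw [hδ'] at hη
    exact (hfQ η (hη.trans hδ) none (d.s η) ⟨rfl, rfl⟩).2.symm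

end Datum

/-! ### Preservation of presentable objects -/

/-- Assume Vopěnka's principle.  Let `(Fᵢ : Mᵢ ⥤ N)` be a set-indexed
collection of functors between preaccessible categories `Mᵢ` and `N`.  Then there are
arbitrarily large regular cardinals `λ` such that each `Fᵢ` sends `λ`-presentable objects
of `Mᵢ` to `λ`-presentable objects of `N`. -/
theorem statement11 (vp : VopenkaPrinciple.{v})
    {I : Type v} {Mi : I → Type u} [∀ i, Category.{v} (Mi i)]
    {N : Type u₂} [Category.{v} N]
    (F : ∀ i, Mi i ⥤ N)
    (hMi : ∀ i, Preaccessible (Mi i)) (hN : Preaccessible N) :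
    ∀ ν : Cardinal.{v}, ∃ lam : Cardinal.{v}, ν ≤ lam ∧ lam.IsRegular ∧
      ∀ (i : I) (X : Mi i), IsCardinalPresentable lam X →
        IsCardinalPresentable lam ((F i).obj X) := by
  intro ν
  choose K o ho using fun i => (hMi i).exists_isDense
  choose μ hμ using fun Y : N => hN.exists_presentable Y
  obtain ⟨κ, hκ, hν, data, hH, hcov⟩ := exists_covering_cardinal vp ho
    (fun d => max (μ ((F d.i).obj d.X)).ord (Cardinal.mk (El (o d.i) d.X)).ord) ν.ord
  refine ⟨κ, (Cardinal.ord_lt_ord.1 hν).le, hκ, fun i X hX => ?_⟩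
  have : Fact κ.IsRegular := ⟨hκ⟩
  -- The objects of `Mi i` occurring before stage `κ`.
  let 𝒵 : Set (Mi i) := {Y | ∃ ζ < κ.ord, ∃ d, data ζ = some d ∧ d.IsOb i Y}
  have hsmall : Small.{v} 𝒵 := by
    choose ζ hζ d hd hY using fun Y : 𝒵 => Y.2
    refine small_of_injective (β := Set.Iio κ.ord) (f := fun Y => ⟨ζ Y, hζ Y⟩) fun Y Y' h => ?_
    have h1 : d Y = d Y' := Option.some.inj <|
      (hd Y).symm.trans ((congrArg (fun t => data t.1) h).trans (hd Y'))
    exact Subtype.ext ((hY Y).unique (h1 ▸ hY Y'))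
  let Z : Shrink.{v} 𝒵 → Mi i := fun t => ((equivShrink 𝒵).symm t).1
  have hZ : ∀ t, Cardinal.mk (El (o i) (Z t)) < κ ∧ μ ((F i).obj (Z t)) < κ := by
    intro t
    obtain ⟨ζ, hζ, d, hd, hY⟩ := ((equivShrink 𝒵).symm t).2
    change d.IsOb i (Z t) at hY
    generalize Z t = Y at hY
    cases hY
    obtain ⟨h1, h2⟩ := max_lt_iff.1 (hH ζ hζ d hd)
    exact ⟨Cardinal.ord_lt_ord.1 h2, Cardinal.ord_lt_ord.1 h1⟩
  obtain ⟨t, ⟨r⟩⟩ := exists_retract (ho i) hκ (fun t => (hZ t).1) hX fun S hS => by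
    -- Enumerate `S` by the ordinals below the initial ordinal of its cardinality.
    obtain ⟨e'⟩ : Nonempty ((Cardinal.mk S).ord.ToType ≃ S) :=
      Cardinal.eq.1 (by rw [Cardinal.mk_toType, Cardinal.card_ord])
    let e : Set.Iio (Cardinal.mk S).ord ≃ S := Ordinal.ToType.mk.toEquiv.trans e'
    classical
    let d : Datum o :=
      { i := i
        X := X
        δ := (Cardinal.mk S).ord
        s := fun η => if h : η < (Cardinal.mk S).ord then some (e ⟨η, h⟩).1 else none }
    obtain ⟨ζ, hζ, d', hd', Y, hY, g, hg⟩ := hcov d (Cardinal.ord_lt_ord.2 hS)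
    have hSd : S ⊆ d.S := fun x hx => by
      refine ⟨(e.symm ⟨x, hx⟩).1, (e.symm ⟨x, hx⟩).2, (dif_pos (e.symm ⟨x, hx⟩).2).trans ?_⟩
      exact congrArg (fun y : S => some y.1) (e.apply_symm_apply ⟨x, hx⟩)
    obtain ⟨t, rfl⟩ : ∃ t, Z t = Y := ⟨equivShrink 𝒵 ⟨Y, ζ, hζ, d', hd', hY⟩, by simp [Z]⟩
    exact ⟨t, g, hg.anti hSd⟩
  have := isCardinalPresentable_iff.1 (hμ _ κ hκ (hZ t).2.le)
  exact isCardinalPresentable_iff.2 ((r.map (F i)).isCardinalPresentable κ)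

end Paper
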